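/- arXiv:1704.01043 — 2 statements merged into one kernel-verified Lean document; each statement's English description precedes it below -/
import Mathlib

section
/- Assume conditions SYM and BAL hold. Then the operator Ξ is self-adjoint, Ξ(𝟙⊗𝟙) = 𝟙⊗𝟙, and for every x ∈ ℝ^Ω one has Ξ(x⊗𝟙) = (Φx)⊗𝟙 and Ξ(𝟙⊗x) = 𝟙⊗(Φx). Moreover, for every x ∈ ℝ^Ω with ⟨x,𝟙⟩ = 0 one has ⟨Ξ(x⊗𝟙), x⊗𝟙⟩ ≤ 0 and ⟨Ξ(𝟙⊗x), 𝟙⊗x⟩ ≤ 0. Finally, Ξℰ ⊆ ℰ and Ξℰ' ⊆ ℰ'. -/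
open MeasureTheory Matrix Finset

/-- The space of weight functions on `k`-tuples of spins from `Ω`. -/
abbrev WF (Ω : Type*) (k : ℕ) := (Fin k → Ω) → ℝ

/-- `ξ = q^{-k} Σ_σ E[ψ(σ)]`. -/
noncomputable def xiP {Ω : Type*} [Fintype Ω] {k : ℕ} (P : Measure (WF Ω k)) : ℝ :=
  (∑ σ : Fin k → Ω, ∫ ψ, ψ σ ∂P) / (Fintype.card Ω : ℝ) ^ k

/-- The matrix `Φ_ψ(ω,ω') = q^{1-k} ξ^{-1} Σ_τ 1{τ_1=ω, τ_2=ω'} ψ(τ)`. -/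
noncomputable def PhiMat {Ω : Type*} [Fintype Ω] [DecidableEq Ω] {k : ℕ} [NeZero k]
    (ξ : ℝ) (ψ : WF Ω k) : Matrix Ω Ω ℝ :=
  fun ω ω' => ((Fintype.card Ω : ℝ) ^ (k - 1) * ξ)⁻¹ *
    ∑ τ : Fin k → Ω, if τ 0 = ω ∧ τ 1 = ω' then ψ τ else 0

/-- The averaged matrix `Φ = E[Φ_ψ]`. -/
noncomputable def PhiAvg {Ω : Type*} [Fintype Ω] [DecidableEq Ω] {k : ℕ} [NeZero k]
    (ξ : ℝ) (P : Measure (WF Ω k)) : Matrix Ω Ω ℝ :=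
  fun ω ω' => ∫ ψ, PhiMat ξ ψ ω ω' ∂P

/-- The operator `Ξ = E[Φ_ψ ⊗ Φ_ψ]` on `ℝ^Ω ⊗ ℝ^Ω ≅ ℝ^{Ω×Ω}`. -/
noncomputable def XiMat {Ω : Type*} [Fintype Ω] [DecidableEq Ω] {k : ℕ} [NeZero k]
    (ξ : ℝ) (P : Measure (WF Ω k)) : Matrix (Ω × Ω) (Ω × Ω) ℝ :=
  fun p r => ∫ ψ, PhiMat ξ ψ p.1 r.1 * PhiMat ξ ψ p.2 r.2 ∂P

/-- Condition SYM, pointwise part. -/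
def SYMpt {Ω : Type*} [Fintype Ω] [DecidableEq Ω] {k : ℕ} (Ψ : Set (WF Ω k)) (ξ : ℝ) : Prop :=
  ∀ ψ ∈ Ψ, ∀ i : Fin k, ∀ ω : Ω,
    (∑ τ : Fin k → Ω, if τ i = ω then ψ τ else 0) = (Fintype.card Ω : ℝ) ^ (k - 1) * ξ

/-- Condition SYM, distributional part. -/
def SYMperm {Ω : Type*} [Fintype Ω] {k : ℕ} (P : Measure (WF Ω k)) : Prop :=
  ∀ θ : Equiv.Perm (Fin k),
    P.map (fun ψ : WF Ω k => fun σ : Fin k → Ω => ψ (σ ∘ θ)) = P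

/-- The function `φ(μ) = Σ_τ E[ψ(τ)] Π_i μ(τ_i)`. -/
noncomputable def phiFun {Ω : Type*} [Fintype Ω] {k : ℕ} (P : Measure (WF Ω k)) :
    (Ω → ℝ) → ℝ :=
  fun μ => ∑ τ : Fin k → Ω, (∫ ψ, ψ τ ∂P) * ∏ i, μ (τ i)

/-- Condition BAL. -/
def BAL {Ω : Type*} [Fintype Ω] {k : ℕ} (P : Measure (WF Ω k)) : Prop :=
  ConcaveOn ℝ (stdSimplex ℝ Ω) (phiFun P) ∧
    ∀ μ ∈ stdSimplex ℝ Ω, phiFun P μ ≤ phiFun P (fun _ => (Fintype.card Ω : ℝ)⁻¹)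

/-- The subspace `ℰ = {z : ⟨z, 𝟙⊗y⟩ = ⟨z, y⊗𝟙⟩ = 0 for all y}`. -/
def Ecal (Ω : Type*) [Fintype Ω] : Set (Ω × Ω → ℝ) :=
  {z | ∀ y : Ω → ℝ, (z ⬝ᵥ fun p => y p.2) = 0 ∧ (z ⬝ᵥ fun p => y p.1) = 0}

/-- The subspace `ℰ' = {z : ⟨z, 𝟙⊗𝟙⟩ = 0}`. -/
def Ecal' (Ω : Type*) [Fintype Ω] : Set (Ω × Ω → ℝ) :=
  {z | (z ⬝ᵥ fun _ => (1 : ℝ)) = 0}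

/-- A weight function evaluated at a fixed tuple is integrable if it is almost surely bounded. -/
theorem integrable_weight_apply {Ω : Type*} [Fintype Ω] {k : ℕ} {P : Measure (WF Ω k)}
    [IsProbabilityMeasure P] (hP : ∀ᵐ ψ ∂P, ∀ τ, ψ τ ∈ Set.Ioo (0 : ℝ) 2) (τ : Fin k → Ω) :
    Integrable (fun ψ : WF Ω k => ψ τ) P := by
  refine Integrable.of_bound (measurable_pi_apply τ).aestronglyMeasurable 2 ?_
  filter_upwards [hP] with ψ hψ
  rw [Real.norm_of_nonneg (hψ τ).1.le]
  exact (hψ τ).2.le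

theorem measurable_PhiMat_apply {Ω : Type*} [Fintype Ω] [DecidableEq Ω] {k : ℕ} [NeZero k]
    (ξ : ℝ) (ω ω' : Ω) : Measurable (fun ψ : WF Ω k => PhiMat ξ ψ ω ω') := by
  unfold PhiMat
  refine Measurable.const_mul (Finset.measurable_sum _ fun τ _ => ?_) _
  split_ifs
  · exact measurable_pi_apply τ
  · exact measurable_const

/-- The normalising constant `q^{k-1} ξ` is positive. -/
theorem normalization_pos {Ω : Type*} [Fintype Ω] [DecidableEq Ω] [Nonempty Ω] {k : ℕ} [NeZero k]
    {ψ : WF Ω k} {c : ℝ} (hψ : ∀ τ, 0 < ψ τ)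
    (hsum : ∀ i : Fin k, ∀ ω : Ω, (∑ τ : Fin k → Ω, if τ i = ω then ψ τ else 0) = c) :
    0 < c := by
  obtain ⟨ω⟩ := ‹Nonempty Ω›
  rw [← hsum 0 ω]
  refine Finset.sum_pos' (fun τ _ => ?_) ⟨fun _ => ω, Finset.mem_univ _, by simpa using hψ _⟩
  split_ifs
  · exact (hψ τ).le
  · exact le_rfl

theorem sum_PhiMat_right {Ω : Type*} [Fintype Ω] [DecidableEq Ω] {k : ℕ} [NeZero k]
    {ξ : ℝ} {ψ : WF Ω k} (hc : (Fintype.card Ω : ℝ) ^ (k - 1) * ξ ≠ 0)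
    (hsum : ∀ i : Fin k, ∀ ω : Ω, (∑ τ : Fin k → Ω, if τ i = ω then ψ τ else 0) =
      (Fintype.card Ω : ℝ) ^ (k - 1) * ξ) (ω : Ω) :
    ∑ ω', PhiMat ξ ψ ω ω' = 1 := by
  unfold PhiMat
  rw [← Finset.mul_sum, Finset.sum_comm]
  have h : ∀ τ : Fin k → Ω, (∑ ω', if τ 0 = ω ∧ τ 1 = ω' then ψ τ else 0) =
      if τ 0 = ω then ψ τ else 0 := fun τ => by
    by_cases h0 : τ 0 = ω <;> simp [h0]
  simp_rw [h]
  rw [hsum, inv_mul_cancel₀ hc]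

theorem PhiMat_nonneg {Ω : Type*} [Fintype Ω] [DecidableEq Ω] {k : ℕ} [NeZero k]
    {ξ : ℝ} {ψ : WF Ω k} (hc : 0 < (Fintype.card Ω : ℝ) ^ (k - 1) * ξ)
    (hψ : ∀ τ, 0 < ψ τ) (ω ω' : Ω) : 0 ≤ PhiMat ξ ψ ω ω' := by
  refine mul_nonneg (inv_nonneg.2 hc.le) (Finset.sum_nonneg fun τ _ => ?_)
  split_ifs
  · exact (hψ τ).le
  · exact le_rfl

/-- Swapping the first two coordinates of `ψ` transposes `Φ_ψ`. -/
theorem PhiMat_swap {Ω : Type*} [Fintype Ω] [DecidableEq Ω] {k : ℕ} [NeZero k]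
    (ξ : ℝ) (ψ : WF Ω k) (ω ω' : Ω) :
    PhiMat ξ (fun σ : Fin k → Ω => ψ (σ ∘ Equiv.swap 0 1)) ω ω' = PhiMat ξ ψ ω' ω := by
  unfold PhiMat
  congr 1
  refine Fintype.sum_equiv (Equiv.arrowCongr (Equiv.swap 0 1) (Equiv.refl Ω)) _ _ fun τ => ?_
  have h : (Equiv.arrowCongr (Equiv.swap (0 : Fin k) 1) (Equiv.refl Ω)) τ =
      τ ∘ Equiv.swap 0 1 := by
    ext i; simp [Equiv.arrowCongr]
  rw [h]
  simp [and_comm]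

theorem measurable_comp_perm {Ω : Type*} {k : ℕ} (θ : Equiv.Perm (Fin k)) :
    Measurable (fun ψ : WF Ω k => fun σ : Fin k → Ω => ψ (σ ∘ θ)) :=
  measurable_pi_lambda _ fun σ => measurable_pi_apply (σ ∘ θ)

theorem XiMat_isSymm {Ω : Type*} [Fintype Ω] [DecidableEq Ω] {k : ℕ} [NeZero k]
    (ξ : ℝ) {P : Measure (WF Ω k)} (hP : SYMperm P) : (XiMat ξ P).IsSymm := by
  ext p r
  have hmeas := measurable_comp_perm (Ω := Ω) (Equiv.swap (0 : Fin k) 1)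
  change ∫ ψ, PhiMat ξ ψ r.1 p.1 * PhiMat ξ ψ r.2 p.2 ∂P =
    ∫ ψ, PhiMat ξ ψ p.1 r.1 * PhiMat ξ ψ p.2 r.2 ∂P
  conv_rhs => rw [← hP (Equiv.swap 0 1)]
  have hprod : Measurable fun ψ : WF Ω k => PhiMat ξ ψ p.1 r.1 * PhiMat ξ ψ p.2 r.2 :=
    (measurable_PhiMat_apply ξ _ _).mul (measurable_PhiMat_apply ξ _ _)
  refine Eq.trans ?_ (integral_map hmeas.aemeasurable hprod.aestronglyMeasurable).symm
  exact integral_congr_ae (.of_forall fun ψ =>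
    (congrArg₂ (· * ·) (PhiMat_swap ξ ψ _ _) (PhiMat_swap ξ ψ _ _)).symm)

theorem exists_perm_map_pair {k : ℕ} [NeZero k] (hk : 2 ≤ k) {i j : Fin k} (hij : i ≠ j) :
    ∃ θ : Equiv.Perm (Fin k), θ 0 = i ∧ θ 1 = j := by
  have h01 : (0 : Fin k) ≠ 1 := by
    intro h
    have := congrArg Fin.val h
    rw [Fin.val_zero, Fin.val_one', Nat.mod_eq_of_lt (by omega)] at this
    omega
  have hj : (0 : Fin k) ≠ Equiv.swap 0 i j := by
    intro h
    have := congrArg (Equiv.swap 0 i) h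
    simp at this
    exact hij this
  exact ⟨Equiv.swap 0 i * Equiv.swap 1 (Equiv.swap 0 i j),
    by simp [Equiv.swap_apply_of_ne_of_ne h01 hj], by simp⟩

theorem integral_weight_comp_perm {Ω : Type*} [Fintype Ω] {k : ℕ} {P : Measure (WF Ω k)}
    (hP : SYMperm P) (θ : Equiv.Perm (Fin k)) (τ : Fin k → Ω) :
    ∫ ψ, ψ (τ ∘ θ) ∂P = ∫ ψ, ψ τ ∂P := by
  conv_rhs => rw [← hP θ]
  rw [integral_map (measurable_comp_perm θ).aemeasurable
    (measurable_pi_apply τ).aestronglyMeasurable]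

/-- If `m` is invariant under permuting coordinates, its two-point correlations agree. -/
theorem sum_mul_pair_eq {Ω : Type*} [Fintype Ω] {k : ℕ} [NeZero k] (hk : 2 ≤ k)
    {m : (Fin k → Ω) → ℝ} (hm : ∀ (θ : Equiv.Perm (Fin k)) τ, m (τ ∘ θ) = m τ)
    (x : Ω → ℝ) {i j : Fin k} (hij : i ≠ j) :
    ∑ τ, m τ * (x (τ i) * x (τ j)) = ∑ τ, m τ * (x (τ 0) * x (τ 1)) := by
  obtain ⟨θ, rfl, rfl⟩ := exists_perm_map_pair hk hij
  refine Fintype.sum_equiv (Equiv.arrowCongr θ.symm (Equiv.refl Ω)) _ _ fun τ => ?_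
  have h : (Equiv.arrowCongr θ.symm (Equiv.refl Ω)) τ = τ ∘ θ := by
    ext i; simp [Equiv.arrowCongr]
  rw [h, hm]
  rfl

/-- Second-order necessary condition at the uniform distribution: if the mean-field polynomial of
a permutation invariant `m` is maximal at the barycentre of the simplex and its linear part
vanishes in direction `x`, then the two-point correlation of `x` is nonpositive. -/
theorem pair_correlation_nonpos {Ω : Type*} [Fintype Ω] [Nonempty Ω]
    {k : ℕ} [NeZero k] (hk : 2 ≤ k) {m : (Fin k → Ω) → ℝ}
    (hm : ∀ (θ : Equiv.Perm (Fin k)) τ, m (τ ∘ θ) = m τ)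
    (hmax : ∀ μ ∈ stdSimplex ℝ Ω, ∑ τ, m τ * ∏ i, μ (τ i) ≤
      ∑ τ : Fin k → Ω, m τ * ∏ _i : Fin k, (Fintype.card Ω : ℝ)⁻¹)
    {x : Ω → ℝ} (hx : ∑ ω, x ω = 0) (hlin : ∀ i, ∑ τ, m τ * x (τ i) = 0) :
    ∑ τ, m τ * (x (τ 0) * x (τ 1)) ≤ 0 := by
  classical
  set u : ℝ := (Fintype.card Ω : ℝ)⁻¹ with hu
  have hq : (0 : ℝ) < Fintype.card Ω := by exact_mod_cast Fintype.card_pos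
  have hupos : 0 < u := inv_pos.2 hq
  let A : Finset (Fin k) → ℝ := fun S => u ^ (k - S.card) * ∑ τ, m τ * ∏ i ∈ S, x (τ i)
  have hexpand : ∀ t : ℝ, ∑ τ, m τ * ∏ i, (t * x (τ i) + u) =
      ∑ S : Finset (Fin k), t ^ S.card * A S := by
    intro t
    simp_rw [Finset.prod_add, Finset.powerset_univ, Finset.mul_sum, A]
    rw [Finset.sum_comm]
    refine Finset.sum_congr rfl fun S _ => ?_
    rw [Finset.mul_sum, Finset.mul_sum]
    refine Finset.sum_congr rfl fun τ _ => ?_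
    rw [Finset.prod_mul_distrib, Finset.prod_const, Finset.prod_const,
      Finset.card_sdiff_of_subset (Finset.subset_univ S), Finset.card_univ, Fintype.card_fin]
    ring
  let R : ℝ → ℝ := fun t => ∑ S : Finset (Fin k), if 2 ≤ S.card then t ^ (S.card - 2) * A S else 0
  have hsplit : ∀ t : ℝ, ∑ τ, m τ * ∏ i, (t * x (τ i) + u) =
      (∑ τ : Fin k → Ω, m τ * ∏ _i : Fin k, u) + t ^ 2 * R t := by
    intro t
    have h0 : (∑ τ : Fin k → Ω, m τ * ∏ _i : Fin k, u) =
        ∑ S : Finset (Fin k), if S = ∅ then A S else 0 := by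
      simp [A, Finset.mul_sum, mul_comm]
    rw [hexpand, h0, Finset.mul_sum, ← Finset.sum_add_distrib]
    refine Finset.sum_congr rfl fun S _ => ?_
    rcases Nat.lt_or_ge S.card 2 with h | h
    · by_cases hS : S = ∅
      · simp [hS]
      · have h1 : S.card = 1 := by
          have := Finset.card_pos.2 (Finset.nonempty_iff_ne_empty.2 hS)
          omega
        obtain ⟨i, rfl⟩ := Finset.card_eq_one.1 h1
        simp [A, hlin]
    · have hS : S ≠ ∅ := by rintro rfl; simp at h
      rw [if_neg hS, if_pos h, zero_add, ← mul_assoc (t ^ 2), ← pow_add, Nat.add_sub_cancel' h]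
  have hsimplex : ∀ᶠ t in nhdsWithin (0 : ℝ) (Set.Ioi 0),
      (fun ω => t * x ω + u) ∈ stdSimplex ℝ Ω := by
    have h : ∀ᶠ t in nhds (0 : ℝ), ∀ ω, 0 < t * x ω + u := by
      refine Filter.eventually_all.2 fun ω => ?_
      have hcont : Continuous fun t : ℝ => t * x ω + u := by fun_prop
      exact hcont.continuousAt.eventually_const_lt (by simpa using hupos)
    filter_upwards [h.filter_mono nhdsWithin_le_nhds] with t ht
    refine ⟨fun ω => (ht ω).le, ?_⟩
    rw [Finset.sum_add_distrib, ← Finset.mul_sum, hx]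
    simp [hu, hq.ne']
  have hR : ∀ᶠ t in nhdsWithin (0 : ℝ) (Set.Ioi 0), R t ≤ 0 := by
    filter_upwards [hsimplex, self_mem_nhdsWithin] with t ht htpos
    have h := hmax _ ht
    rw [hsplit t] at h
    have htpos' : 0 < t ^ 2 := pow_pos htpos 2
    by_contra! hneg
    nlinarith [mul_pos htpos' hneg]
  have hRcont : Continuous R := by
    refine continuous_finsetSum _ fun S _ => ?_
    split_ifs <;> fun_prop
  have hR0 : R 0 ≤ 0 :=
    le_of_tendsto (hRcont.continuousAt.tendsto.mono_left nhdsWithin_le_nhds) hR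
  set a := ∑ τ, m τ * (x (τ 0) * x (τ 1)) with ha
  have hval : R 0 = (k.choose 2 : ℝ) * (u ^ (k - 2) * a) := by
    have h : ∀ S : Finset (Fin k),
        (if 2 ≤ S.card then (0 : ℝ) ^ (S.card - 2) * A S else 0) =
          if S.card = 2 then u ^ (k - 2) * a else 0 := by
      intro S
      by_cases h2 : S.card = 2
      · obtain ⟨i, j, hij, hS⟩ := Finset.card_eq_two.1 h2
        rw [if_pos h2.ge, if_pos h2, h2]
        simp only [A, h2, Nat.sub_self, pow_zero, one_mul]
        subst hS
        simp_rw [Finset.prod_pair hij]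
        rw [sum_mul_pair_eq hk hm x hij]
      · rw [if_neg h2]
        split_ifs with h
        · rw [zero_pow (by omega), zero_mul]
        · rfl
    simp only [R]
    rw [Finset.sum_congr rfl fun S _ => h S, ← Finset.sum_filter, Finset.sum_const,
      Finset.univ_filter_card_eq, Finset.card_powersetCard]
    simp
  have hch : (0 : ℝ) < k.choose 2 := by exact_mod_cast Nat.choose_pos hk
  rw [hval] at hR0
  by_contra! hpos
  exact absurd hR0 (not_le.2 (mul_pos hch (mul_pos (pow_pos hupos _) hpos)))

theorem PhiAvg_apply {Ω : Type*} [Fintype Ω] [DecidableEq Ω] {k : ℕ} [NeZero k]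
    (ξ : ℝ) {P : Measure (WF Ω k)} (hint : ∀ τ, Integrable (fun ψ : WF Ω k => ψ τ) P)
    (ω ω' : Ω) :
    PhiAvg ξ P ω ω' = PhiMat ξ (fun τ => ∫ ψ, ψ τ ∂P) ω ω' := by
  unfold PhiAvg PhiMat
  rw [integral_const_mul, integral_finsetSum]
  · congr 1
    refine Finset.sum_congr rfl fun τ _ => ?_
    split_ifs <;> simp
  · intro τ _
    split_ifs
    · exact hint τ
    · exact integrable_zero _ _ _

theorem PhiMat_mulVec_dotProduct {Ω : Type*} [Fintype Ω] [DecidableEq Ω] {k : ℕ} [NeZero k]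
    (ξ : ℝ) (m : WF Ω k) (x : Ω → ℝ) :
    (PhiMat ξ m).mulVec x ⬝ᵥ x =
      ((Fintype.card Ω : ℝ) ^ (k - 1) * ξ)⁻¹ * ∑ τ, m τ * (x (τ 0) * x (τ 1)) := by
  have h : ∀ τ : Fin k → Ω, m τ * (x (τ 0) * x (τ 1)) =
      ∑ ω, ∑ ω', (if τ 0 = ω ∧ τ 1 = ω' then m τ else 0) * (x ω' * x ω) := by
    intro τ
    simp [ite_and, mul_comm]
  simp_rw [h, dotProduct, mulVec, dotProduct, PhiMat, Finset.sum_mul, Finset.mul_sum,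
    Finset.sum_mul]
  rw [Finset.sum_comm]
  rw [Finset.sum_comm (s := (Finset.univ : Finset (Fin k → Ω)))]
  rw [Finset.sum_comm]
  refine Finset.sum_congr rfl fun ω _ => ?_
  rw [Finset.sum_comm (s := (Finset.univ : Finset (Fin k → Ω)))]
  refine Finset.sum_congr rfl fun ω' _ => Finset.sum_congr rfl fun τ _ => ?_
  ring

/-- Lemma "Lemma_Xi": under SYM and BAL, `Ξ` is self-adjoint,
`Ξ(𝟙⊗𝟙) = 𝟙⊗𝟙`, `Ξ(x⊗𝟙) = (Φx)⊗𝟙`, `Ξ(𝟙⊗x) = 𝟙⊗(Φx)`, the quadratic form of `Ξ` is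
nonpositive on vectors `x⊗𝟙` and `𝟙⊗x` with `x ⊥ 𝟙`, and `Ξ` leaves `ℰ` and `ℰ'` invariant. -/
theorem stmt1 {Ω : Type*} [Fintype Ω] [DecidableEq Ω] [Nonempty Ω]
    {k : ℕ} [NeZero k] (hk : 2 ≤ k)
    (Ψ : Set (WF Ω k)) (P : Measure (WF Ω k)) [IsProbabilityMeasure P]
    (hΨval : ∀ ψ ∈ Ψ, ∀ τ, ψ τ ∈ Set.Ioo (0 : ℝ) 2)
    (hPΨ : ∀ᵐ ψ ∂P, ψ ∈ Ψ)
    (hSYM : SYMpt Ψ (xiP P) ∧ SYMperm P) (hBAL : BAL P) :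
    (XiMat (xiP P) P).IsSymm ∧
    ((XiMat (xiP P) P).mulVec (fun _ => 1) = fun _ => 1) ∧
    (∀ x : Ω → ℝ,
      ((XiMat (xiP P) P).mulVec (fun p => x p.1) =
        fun p => (PhiAvg (xiP P) P).mulVec x p.1) ∧
      ((XiMat (xiP P) P).mulVec (fun p => x p.2) =
        fun p => (PhiAvg (xiP P) P).mulVec x p.2)) ∧
    (∀ x : Ω → ℝ, (∑ ω, x ω = 0) →
      ((XiMat (xiP P) P).mulVec (fun p => x p.1) ⬝ᵥ fun p => x p.1) ≤ 0 ∧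
      ((XiMat (xiP P) P).mulVec (fun p => x p.2) ⬝ᵥ fun p => x p.2) ≤ 0) ∧
    (∀ z ∈ Ecal Ω, (XiMat (xiP P) P).mulVec z ∈ Ecal Ω) ∧
    (∀ z ∈ Ecal' Ω, (XiMat (xiP P) P).mulVec z ∈ Ecal' Ω) := by
  obtain ⟨hpt, hperm⟩ := hSYM
  have hval : ∀ᵐ ψ ∂P, ∀ τ, ψ τ ∈ Set.Ioo (0 : ℝ) 2 := hPΨ.mono hΨval
  have hint := integrable_weight_apply hval
  set ξ := xiP P
  have hc : 0 < (Fintype.card Ω : ℝ) ^ (k - 1) * ξ := by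
    obtain ⟨ψ, hψ⟩ := hPΨ.exists
    exact normalization_pos (fun τ => (hΨval ψ hψ τ).1) (hpt ψ hψ)
  have hrow : ∀ᵐ ψ ∂P, ∀ ω, ∑ ω', PhiMat ξ ψ ω ω' = 1 :=
    hPΨ.mono fun ψ hψ => sum_PhiMat_right hc.ne' (hpt ψ hψ)
  have hbound : ∀ᵐ ψ ∂P, ∀ ω ω', ‖PhiMat ξ ψ ω ω'‖ ≤ 1 := by
    filter_upwards [hval, hrow] with ψ hψ hr ω ω'
    have hnn := PhiMat_nonneg hc (fun τ => (hψ τ).1)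
    rw [Real.norm_of_nonneg (hnn ω ω'), ← hr ω]
    exact Finset.single_le_sum (fun a _ => hnn ω a) (Finset.mem_univ ω')
  have hintΦ : ∀ ω ω', Integrable (fun ψ => PhiMat ξ ψ ω ω') P := fun ω ω' =>
    Integrable.of_bound (measurable_PhiMat_apply ξ ω ω').aestronglyMeasurable 1
      (hbound.mono fun ψ h => h ω ω')
  have hintΞ : ∀ a b c d,
      Integrable (fun ψ => PhiMat ξ ψ a b * PhiMat ξ ψ c d) P := fun a b c d =>
    (hintΦ c d).bdd_mul (measurable_PhiMat_apply ξ a b).aestronglyMeasurable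
      (hbound.mono fun ψ h => h a b)
  have hΞsnd : ∀ p ω, ∑ ω', XiMat ξ P p (ω, ω') = PhiAvg ξ P p.1 ω := by
    intro p ω
    unfold XiMat PhiAvg
    rw [← integral_finsetSum _ fun ω' _ => hintΞ _ _ _ _]
    refine integral_congr_ae (hrow.mono fun ψ h => ?_)
    simp only [← Finset.mul_sum, h, mul_one]
  have hΞfst : ∀ p ω', ∑ ω, XiMat ξ P p (ω, ω') = PhiAvg ξ P p.2 ω' := by
    intro p ω'
    unfold XiMat PhiAvg
    rw [← integral_finsetSum _ fun ω _ => hintΞ _ _ _ _]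
    refine integral_congr_ae (hrow.mono fun ψ h => ?_)
    simp only [← Finset.sum_mul, h, one_mul]
  have hΦrow : ∀ ω, ∑ ω', PhiAvg ξ P ω ω' = 1 := by
    intro ω
    unfold PhiAvg
    rw [← integral_finsetSum _ fun ω' _ => hintΦ _ _,
      integral_congr_ae (hrow.mono fun ψ h => h ω)]
    simp
  have hsymm := XiMat_isSymm ξ hperm
  have hleft : ∀ x : Ω → ℝ, (XiMat ξ P).mulVec (fun p => x p.1) =
      fun p => (PhiAvg ξ P).mulVec x p.1 := by
    intro x
    ext p
    simp only [mulVec, dotProduct, Fintype.sum_prod_type, ← Finset.sum_mul, hΞsnd]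
  have hright : ∀ x : Ω → ℝ, (XiMat ξ P).mulVec (fun p => x p.2) =
      fun p => (PhiAvg ξ P).mulVec x p.2 := by
    intro x
    ext p
    simp only [mulVec, dotProduct, Fintype.sum_prod_type_right, ← Finset.sum_mul, hΞfst]
  have hone : (XiMat ξ P).mulVec (fun _ => 1) = fun _ => 1 := by
    rw [hleft fun _ => 1]
    ext p
    simp [mulVec, dotProduct, hΦrow]
  have hadj : ∀ z y : Ω × Ω → ℝ,
      (XiMat ξ P).mulVec z ⬝ᵥ y = z ⬝ᵥ (XiMat ξ P).mulVec y := by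
    intro z y
    rw [dotProduct_comm, dotProduct_mulVec, dotProduct_comm, ← mulVec_transpose, hsymm.eq]
  have hquad : ∀ x : Ω → ℝ, ∑ ω, x ω = 0 → (PhiAvg ξ P).mulVec x ⬝ᵥ x ≤ 0 := by
    intro x hx
    have hΦ : PhiAvg ξ P = PhiMat ξ (fun τ => ∫ ψ, ψ τ ∂P) := by
      ext ω ω'
      exact PhiAvg_apply ξ hint ω ω'
    rw [hΦ, PhiMat_mulVec_dotProduct]
    refine mul_nonpos_of_nonneg_of_nonpos (inv_nonneg.2 hc.le)
      (pair_correlation_nonpos hk (integral_weight_comp_perm hperm) hBAL.2 hx fun i => ?_)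
    have hmarg : ∀ ω, (∑ τ : Fin k → Ω, if τ i = ω then ∫ ψ, ψ τ ∂P else 0) =
        (Fintype.card Ω : ℝ) ^ (k - 1) * ξ := by
      intro ω
      have h : ∀ τ : Fin k → Ω, (if τ i = ω then ∫ ψ, ψ τ ∂P else 0) =
          ∫ ψ : WF Ω k, (if τ i = ω then ψ τ else 0) ∂P := fun τ => by
        split_ifs <;> simp
      simp_rw [h]
      rw [← integral_finsetSum, integral_congr_ae (hPΨ.mono fun ψ hψ => hpt ψ hψ i ω)]
      · simp
      · intro τ _
        split_ifs
        · exact hint τ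
        · exact integrable_zero _ _ _
    have h : ∀ τ : Fin k → Ω, (∫ ψ, ψ τ ∂P) * x (τ i) =
        ∑ ω, (if τ i = ω then ∫ ψ, ψ τ ∂P else 0) * x ω := fun τ => by simp
    simp_rw [h]
    rw [Finset.sum_comm]
    simp_rw [← Finset.sum_mul, hmarg]
    rw [← Finset.mul_sum, hx, mul_zero]
  refine ⟨hsymm, hone, fun x => ⟨hleft x, hright x⟩, fun x hx => ⟨?_, ?_⟩, fun z hz y => ⟨?_, ?_⟩,
    fun z hz => ?_⟩
  · rw [hleft]
    simp only [dotProduct, Fintype.sum_prod_type_right]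
    exact Finset.sum_nonpos fun _ _ => hquad x hx
  · rw [hright]
    simp only [dotProduct, Fintype.sum_prod_type]
    exact Finset.sum_nonpos fun _ _ => hquad x hx
  · rw [hadj, hright]
    exact (hz ((PhiAvg ξ P).mulVec y)).1
  · rw [hadj, hleft]
    exact (hz ((PhiAvg ξ P).mulVec y)).2
  · change _ ⬝ᵥ _ = _
    rw [hadj, hone]
    exact hz
end

section
/- Assume conditions SYM and BAL hold, and let s > 0 satisfy s·|λ| < 1 for every eigenvalue λ of the restriction of Ξ to ℰ (which makes sense since Ξℰ ⊆ ℰ under SYM and BAL). Then Σ_{ℓ=1}^{∞} (s^ℓ/(2ℓ)) · ∫⋯∫ ( Tr(Φ_{ψ_1}·⋯·Φ_{ψ_ℓ}) − 1 )² dP(ψ_1)⋯dP(ψ_ℓ) = −(1/2)·ln det( (id − s·Ξ)|_ℰ ), i.e. the series on the left converges and equals −(1/2)·Σ_λ ln(1 − s·λ), the sum running over the eigenvalues λ of Ξ|_ℰ counted with multiplicity. (The paper applies this with s = d(k−1) for d below the condensation threshold, where the spectral hypothesis holds by the generalized Kesten–Stigum bound.) -/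
open MeasureTheory Matrix Finset

open scoped Kronecker

/-- The rank one projection `q⁻¹ 𝟙𝟙ᵀ` onto the constant vectors. -/
noncomputable def uniformMat (Ω : Type*) [Fintype Ω] : Matrix Ω Ω ℝ :=
  fun _ _ => (Fintype.card Ω : ℝ)⁻¹

section MatrixProducts

/-- The expectation of a product of i.i.d. random matrices is the power of the expectation. -/
lemma integrable_and_integral_prod_ofFn {X n : Type*} [MeasurableSpace X] [Fintype n]
    [DecidableEq n] (μ : Measure X) [IsProbabilityMeasure μ] (B : X → Matrix n n ℝ)
    (hB : ∀ p r, Integrable (fun x => B x p r) μ) (ℓ : ℕ) (p r : n) :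
    Integrable (fun f : Fin ℓ → X => (List.ofFn fun i => B (f i)).prod p r)
        (Measure.pi fun _ => μ) ∧
      ∫ f : Fin ℓ → X, (List.ofFn fun i => B (f i)).prod p r ∂(Measure.pi fun _ => μ) =
        ((Matrix.of fun p r => ∫ x, B x p r ∂μ) ^ ℓ) p r := by
  induction ℓ generalizing p r with
  | zero => simp
  | succ ℓ ih =>
    have hmp := measurePreserving_piFinSuccAbove (n := ℓ) (fun _ => μ) 0
    set g : X × (Fin ℓ → X) → ℝ := fun y =>
      ∑ t, B y.1 p t * (List.ofFn fun i => B (y.2 i)).prod t r with hg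
    have hfun : (fun f : Fin (ℓ + 1) → X => (List.ofFn fun i => B (f i)).prod p r) =
        g ∘ MeasurableEquiv.piFinSuccAbove (fun _ => X) 0 := by
      funext f
      simp [hg, List.ofFn_succ, Matrix.mul_apply, MeasurableEquiv.piFinSuccAbove,
        Fin.insertNthEquiv, Fin.tail]
    have hint : ∀ t, Integrable (fun y : X × (Fin ℓ → X) =>
        B y.1 p t * (List.ofFn fun i => B (y.2 i)).prod t r)
        (μ.prod (Measure.pi fun _ => μ)) := fun t => (hB p t).mul_prod (ih t r).1
    constructor
    · rw [hfun]
      exact (hmp.integrable_comp_emb (MeasurableEquiv.measurableEmbedding _)).2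
        (integrable_finsetSum _ fun t _ => hint t)
    · rw [hfun]
      have := hmp.integral_comp (MeasurableEquiv.measurableEmbedding _) g
      refine this.trans ?_
      rw [hg, integral_finsetSum _ fun t _ => hint t, pow_succ', Matrix.mul_apply]
      refine Finset.sum_congr rfl fun t _ => ?_
      rw [integral_prod_mul (fun x => B x p t)
        (fun f : Fin ℓ → X => (List.ofFn fun i => B (f i)).prod t r), (ih t r).2]
      rfl

lemma prod_map_sub_of_absorbing {R : Type*} [Ring R] (J : R) (hJ : J * J = J) (L : List R)
    (hL : ∀ a ∈ L, J * a = J ∧ a * J = J) (hne : L ≠ []) :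
    J * L.prod = J ∧ (L.map (· - J)).prod = L.prod - J := by
  induction L with
  | nil => exact absurd rfl hne
  | cons a l ih =>
    obtain ⟨ha, ha'⟩ := hL a (by simp)
    rcases eq_or_ne l [] with rfl | hl
    · simp [ha]
    · obtain ⟨h1, h2⟩ := ih (fun b hb => hL b (by simp [hb])) hl
      constructor
      · rw [List.prod_cons, ← mul_assoc, ha, h1]
      · rw [List.map_cons, List.prod_cons, List.prod_cons, h2]
        simp only [sub_mul, mul_sub, ha', h1, hJ]
        abel

lemma trace_prod_sq {n : Type*} [Fintype n] [DecidableEq n] (L : List (Matrix n n ℝ)) :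
    L.prod.trace ^ 2 = (L.map fun a => a ⊗ₖ a).prod.trace := by
  have h : (L.map fun a => a ⊗ₖ a).prod = L.prod ⊗ₖ L.prod := by
    induction L with
    | nil => simp
    | cons a l ih => rw [List.map_cons, List.prod_cons, ih, List.prod_cons, mul_kronecker_mul]
  rw [h, trace_kronecker, sq]

lemma trace_pow_of_orthonormal {n ι : Type*} [Fintype n] [DecidableEq n] [Fintype ι]
    [DecidableEq ι] (V : Matrix n ι ℝ) (hV : Vᵀ * V = 1) (d : ι → ℝ) {ℓ : ℕ} (hℓ : ℓ ≠ 0) :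
    ((V * diagonal d * Vᵀ) ^ ℓ).trace = ∑ j, d j ^ ℓ := by
  have h : ∀ n : ℕ, (V * diagonal d * Vᵀ) ^ (n + 1) = V * diagonal d ^ (n + 1) * Vᵀ := by
    intro n
    induction n with
    | zero => simp
    | succ n ih =>
      rw [pow_succ, ih, pow_succ (diagonal d) (n + 1)]
      calc V * diagonal d ^ (n + 1) * Vᵀ * (V * diagonal d * Vᵀ)
          = V * diagonal d ^ (n + 1) * (Vᵀ * V) * diagonal d * Vᵀ := by
            simp only [Matrix.mul_assoc]
        _ = _ := by rw [hV, Matrix.mul_one]; simp only [Matrix.mul_assoc]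
  obtain ⟨n, rfl⟩ := Nat.exists_eq_succ_of_ne_zero hℓ
  rw [Nat.succ_eq_add_one, h, Matrix.mul_assoc, trace_mul_comm, Matrix.mul_assoc, hV,
    Matrix.mul_one, diagonal_pow, trace_diagonal]
  rfl

end MatrixProducts

section UniformProjection

variable {Ω : Type*} [Fintype Ω]

lemma uniformMat_mul_self [Nonempty Ω] : uniformMat Ω * uniformMat Ω = uniformMat Ω := by
  ext i j
  simp [uniformMat, Matrix.mul_apply]

lemma trace_uniformMat [Nonempty Ω] : (uniformMat Ω).trace = 1 := by
  simp [uniformMat, Matrix.trace]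

lemma dotProduct_kronecker_col (z : Ω × Ω → ℝ) (R : Matrix Ω Ω ℝ) (r : Ω × Ω) :
    ∑ p, (R ⊗ₖ R) p r * z p =
      ∑ p₁, (∑ p₂, z (p₁, p₂) * R p₂ r.2) * R p₁ r.1 := by
  rw [Fintype.sum_prod_type]
  refine Finset.sum_congr rfl fun a _ => ?_
  rw [Finset.sum_mul]
  refine Finset.sum_congr rfl fun b _ => ?_
  rw [kronecker_apply]
  ring

variable [DecidableEq Ω]

lemma sum_one_sub_uniformMat [Nonempty Ω] (r : Ω) :
    ∑ p, (1 - uniformMat Ω) p r = 0 := by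
  simp [uniformMat, Matrix.sub_apply, Matrix.one_apply]

lemma sum_mul_one_sub_uniformMat (z : Ω → ℝ) (r : Ω) :
    ∑ p, z p * (1 - uniformMat Ω) p r = z r - (∑ p, z p) * (Fintype.card Ω : ℝ)⁻¹ := by
  simp [uniformMat, Matrix.sub_apply, Matrix.one_apply, mul_sub, Finset.sum_mul]

lemma sums_eq_zero_of_mem_Ecal {z : Ω × Ω → ℝ} (hz : z ∈ Ecal Ω) :
    (∀ a, ∑ b, z (a, b) = 0) ∧ ∀ b, ∑ a, z (a, b) = 0 := by
  constructor
  · intro a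
    have h := (hz fun c => if c = a then 1 else 0).2
    rw [dotProduct, Fintype.sum_prod_type] at h
    rw [Finset.sum_eq_single a (by simp +contextual) (by simp)] at h
    simpa using h
  · intro b
    have h := (hz fun c => if c = b then 1 else 0).1
    rw [dotProduct, Fintype.sum_prod_type] at h
    simpa using h

lemma kronecker_col_dotProduct_of_mem_Ecal {z : Ω × Ω → ℝ} (hz : z ∈ Ecal Ω) (r : Ω × Ω) :
    ∑ p, ((1 - uniformMat Ω) ⊗ₖ (1 - uniformMat Ω)) p r * z p = z r := by
  obtain ⟨h1, h2⟩ := sums_eq_zero_of_mem_Ecal hz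
  rw [dotProduct_kronecker_col]
  simp only [sum_mul_one_sub_uniformMat fun b => z (_, b), h1, zero_mul, sub_zero]
  rw [sum_mul_one_sub_uniformMat fun a => z (a, r.2), h2]
  simp

lemma kronecker_col_mem_Ecal [Nonempty Ω] (r : Ω × Ω) :
    (fun p => ((1 - uniformMat Ω) ⊗ₖ (1 - uniformMat Ω)) p r) ∈ Ecal Ω := by
  intro y
  constructor
  · rw [dotProduct, dotProduct_kronecker_col (fun p => y p.2)]
    simp only [← Finset.mul_sum, sum_one_sub_uniformMat, mul_zero]
  · rw [dotProduct, dotProduct_kronecker_col (fun p => y p.1)]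
    simp only [← Finset.mul_sum, sum_one_sub_uniformMat, mul_zero, zero_mul, Finset.sum_const_zero]

/-- An orthonormal basis of `ℰ` resolves the orthogonal projection onto `ℰ`. -/
lemma kronecker_eq_mul_transpose [Nonempty Ω] {m : ℕ} (v : Fin m → Ω × Ω → ℝ)
    (hvE : ∀ j, v j ∈ Ecal Ω) (hspan : ∀ z ∈ Ecal Ω, z = ∑ j, (z ⬝ᵥ v j) • v j) :
    (1 - uniformMat Ω) ⊗ₖ (1 - uniformMat Ω) = (Matrix.of v)ᵀ * Matrix.of v := by
  ext p r
  have h := congrFun (hspan _ (kronecker_col_mem_Ecal r)) p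
  simp only [dotProduct, kronecker_col_dotProduct_of_mem_Ecal (hvE _)] at h
  rw [h, Matrix.mul_apply, Finset.sum_apply]
  exact Finset.sum_congr rfl fun j _ => by simp [mul_comm]

end UniformProjection

section PhiMat

variable {Ω : Type*} [Fintype Ω] [DecidableEq Ω] {k : ℕ} [NeZero k]

lemma xi_scale_ne_zero [Nonempty Ω] {Ψ : Set (WF Ω k)} {ξ : ℝ}
    (hΨval : ∀ ψ ∈ Ψ, ∀ τ, ψ τ ∈ Set.Ioo (0 : ℝ) 2) (hSYM : SYMpt Ψ ξ)
    {ψ : WF Ω k} (hψ : ψ ∈ Ψ) : (Fintype.card Ω : ℝ) ^ (k - 1) * ξ ≠ 0 := by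
  obtain ⟨ω⟩ := ‹Nonempty Ω›
  rw [← hSYM ψ hψ 0 ω]
  refine (Finset.sum_pos' (fun τ _ => ?_) ⟨fun _ => ω, Finset.mem_univ _, ?_⟩).ne'
  · split_ifs
    exacts [(hΨval ψ hψ τ).1.le, le_rfl]
  · simpa using (hΨval ψ hψ _).1

/-- Under SYM the matrix `Φ_ψ` has unit row and column sums. -/
lemma PhiMat_mul_uniformMat [Nonempty Ω] {Ψ : Set (WF Ω k)} {ξ : ℝ}
    (hΨval : ∀ ψ ∈ Ψ, ∀ τ, ψ τ ∈ Set.Ioo (0 : ℝ) 2) (hSYM : SYMpt Ψ ξ)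
    {ψ : WF Ω k} (hψ : ψ ∈ Ψ) :
    uniformMat Ω * PhiMat ξ ψ = uniformMat Ω ∧ PhiMat ξ ψ * uniformMat Ω = uniformMat Ω := by
  have hc := xi_scale_ne_zero hΨval hSYM hψ
  constructor
  · ext a b
    simp only [uniformMat, Matrix.mul_apply, PhiMat]
    rw [← Finset.mul_sum, ← Finset.mul_sum, Finset.sum_comm]
    have : ∀ τ : Fin k → Ω, (∑ x, if τ 0 = x ∧ τ 1 = b then ψ τ else 0) =
        if τ 1 = b then ψ τ else 0 := fun τ => by simp [ite_and]
    simp only [this, hSYM ψ hψ 1 b, inv_mul_cancel₀ hc, mul_one]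
  · ext a b
    simp only [uniformMat, Matrix.mul_apply, PhiMat]
    rw [← Finset.sum_mul, ← Finset.mul_sum, Finset.sum_comm]
    have : ∀ τ : Fin k → Ω, (∑ x, if τ 0 = a ∧ τ 1 = x then ψ τ else 0) =
        if τ 0 = a then ψ τ else 0 := fun τ => by simp [ite_and]
    simp only [this, hSYM ψ hψ 0 a, inv_mul_cancel₀ hc, one_mul]

lemma memLp_PhiMat {Ψ : Set (WF Ω k)} (P : Measure (WF Ω k)) [IsProbabilityMeasure P] (ξ : ℝ)
    (hΨval : ∀ ψ ∈ Ψ, ∀ τ, ψ τ ∈ Set.Ioo (0 : ℝ) 2) (hPΨ : ∀ᵐ ψ ∂P, ψ ∈ Ψ) (a b : Ω) :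
    MemLp (fun ψ => PhiMat ξ ψ a b) 2 P := by
  have hsum : MemLp (fun ψ : WF Ω k => ∑ τ : Fin k → Ω, if τ 0 = a ∧ τ 1 = b then ψ τ else 0)
      2 P := by
    refine memLp_finsetSum _ fun τ _ => ?_
    split_ifs
    · refine MemLp.of_bound (measurable_pi_apply τ).aestronglyMeasurable 2 ?_
      filter_upwards [hPΨ] with ψ hψ
      have := hΨval ψ hψ τ
      rw [Real.norm_eq_abs, abs_of_pos this.1]
      exact this.2.le
    · exact memLp_const 0
  exact hsum.const_mul _

/-- The second moment of `Tr(Φ_{ψ_1}⋯Φ_{ψ_ℓ}) - 1` is the `ℓ`-th power sum of the eigenvalues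
of `Ξ` on `ℰ`. -/
lemma integral_trace_sub_one_sq [Nonempty Ω] {Ψ : Set (WF Ω k)} (P : Measure (WF Ω k))
    [IsProbabilityMeasure P] (ξ : ℝ)
    (hΨval : ∀ ψ ∈ Ψ, ∀ τ, ψ τ ∈ Set.Ioo (0 : ℝ) 2) (hPΨ : ∀ᵐ ψ ∂P, ψ ∈ Ψ)
    (hSYM : SYMpt Ψ ξ) {m : ℕ} (v : Fin m → Ω × Ω → ℝ) (lam : Fin m → ℝ)
    (hvE : ∀ j, v j ∈ Ecal Ω)
    (hvON : ∀ i j, (v i ⬝ᵥ v j) = if i = j then 1 else 0)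
    (heig : ∀ j, (XiMat ξ P).mulVec (v j) = lam j • v j)
    (hspan : ∀ z ∈ Ecal Ω, z = ∑ j, (z ⬝ᵥ v j) • v j) {ℓ : ℕ} (hℓ : ℓ ≠ 0) :
    ∫ f : Fin ℓ → WF Ω k, (Matrix.trace (List.ofFn fun i => PhiMat ξ (f i)).prod - 1) ^ 2
      ∂(Measure.pi fun _ : Fin ℓ => P) = ∑ j, lam j ^ ℓ := by
  set A : WF Ω k → Matrix Ω Ω ℝ := fun ψ => PhiMat ξ ψ - uniformMat Ω
  set B : WF Ω k → Matrix (Ω × Ω) (Ω × Ω) ℝ := fun ψ => A ψ ⊗ₖ A ψ with hB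
  have hLp := memLp_PhiMat P ξ hΨval hPΨ
  have hBint : ∀ p r, Integrable (fun ψ => B ψ p r) P := fun p r =>
    ((hLp p.1 r.1).sub (memLp_const _)).integrable_mul ((hLp p.2 r.2).sub (memLp_const _))
  have hmean : (Matrix.of fun p r => ∫ ψ, B ψ p r ∂P) =
      (Matrix.of v)ᵀ * diagonal lam * (Matrix.of v)ᵀᵀ := by
    have h1 : (Matrix.of fun p r => ∫ ψ, B ψ p r ∂P) =
        XiMat ξ P * ((1 - uniformMat Ω) ⊗ₖ (1 - uniformMat Ω)) := by
      ext p r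
      rw [Matrix.mul_apply, Matrix.of_apply]
      simp only [XiMat, ← integral_mul_const]
      rw [← integral_finsetSum _ fun t _ =>
        ((hLp p.1 t.1).integrable_mul (hLp p.2 t.2)).mul_const _]
      refine integral_congr_ae ?_
      filter_upwards [hPΨ] with ψ hψ
      have hR : A ψ = PhiMat ξ ψ * (1 - uniformMat Ω) := by
        rw [mul_sub, mul_one, (PhiMat_mul_uniformMat hΨval hSYM hψ).2]
      simp only [hB, hR, mul_kronecker_mul]
      rw [Matrix.mul_apply]
      rfl
    have h2 : XiMat ξ P * (Matrix.of v)ᵀ = (Matrix.of v)ᵀ * diagonal lam := by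
      ext p j
      have := congrFun (heig j) p
      rw [Matrix.mul_diagonal]
      simpa [Matrix.mul_apply, Matrix.mulVec, dotProduct, mul_comm] using this
    rw [h1, kronecker_eq_mul_transpose v hvE hspan, ← Matrix.mul_assoc, h2, transpose_transpose]
  have hpt : ∀ᵐ f ∂(Measure.pi fun _ : Fin ℓ => P),
      (Matrix.trace (List.ofFn fun i => PhiMat ξ (f i)).prod - 1) ^ 2 =
        ∑ p, (List.ofFn fun i => B (f i)).prod p p := by
    have hall : ∀ᵐ f ∂(Measure.pi fun _ : Fin ℓ => P), ∀ i, f i ∈ Ψ :=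
      ae_all_iff.2 fun i => (Measure.tendsto_eval_ae_ae (μ := fun _ : Fin ℓ => P)) hPΨ
    filter_upwards [hall] with f hf
    have h := (prod_map_sub_of_absorbing (uniformMat Ω) uniformMat_mul_self
      (List.ofFn fun i => PhiMat ξ (f i)) (by
        intro a ha
        obtain ⟨i, rfl⟩ := List.mem_ofFn.1 ha
        exact PhiMat_mul_uniformMat hΨval hSYM (hf i)) (by simpa using hℓ)).2
    rw [← trace_uniformMat (Ω := Ω), ← trace_sub, ← h, trace_prod_sq, List.map_map,
      List.map_ofFn]
    rfl
  rw [integral_congr_ae hpt, integral_finsetSum _ fun p _ =>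
    (integrable_and_integral_prod_ofFn P B hBint ℓ p p).1]
  simp only [(integrable_and_integral_prod_ofFn P B hBint ℓ _ _).2, hmean]
  refine trace_pow_of_orthonormal _ ?_ lam hℓ
  ext i j
  rw [Matrix.one_apply, ← hvON i j]
  rfl

end PhiMat

/-- Lemma "prop:Bound4DeltaYSq": under SYM and BAL, if `(v_j, λ_j)` is an
orthonormal eigenbasis of the restriction of `Ξ` to `ℰ` and `s > 0` satisfies `s·|λ_j| < 1`
for every eigenvalue, then
`Σ_{ℓ≥1} (s^ℓ/(2ℓ))·E[(Tr(Φ_{ψ_1}⋯Φ_{ψ_ℓ}) - 1)²] = -(1/2)·Σ_j ln(1 - s·λ_j)`,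
the series converging with the stated sum. -/
theorem stmt12 {Ω : Type*} [Fintype Ω] [DecidableEq Ω] [Nonempty Ω]
    {k : ℕ} [NeZero k] (hk : 2 ≤ k)
    (Ψ : Set (WF Ω k)) (P : Measure (WF Ω k)) [IsProbabilityMeasure P]
    (hΨval : ∀ ψ ∈ Ψ, ∀ τ, ψ τ ∈ Set.Ioo (0 : ℝ) 2)
    (hPΨ : ∀ᵐ ψ ∂P, ψ ∈ Ψ)
    (hSYM : SYMpt Ψ (xiP P) ∧ SYMperm P) (hBAL : BAL P)
    (s : ℝ) (hs : 0 < s)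
    {m : ℕ} (v : Fin m → Ω × Ω → ℝ) (lam : Fin m → ℝ)
    (hvE : ∀ j, v j ∈ Ecal Ω)
    (hvON : ∀ i j, (v i ⬝ᵥ v j) = if i = j then 1 else 0)
    (heig : ∀ j, (XiMat (xiP P) P).mulVec (v j) = lam j • v j)
    (hspan : ∀ z ∈ Ecal Ω, z = ∑ j, (z ⬝ᵥ v j) • v j)
    (hslam : ∀ j, s * |lam j| < 1) :
    HasSum
      (fun ℓ : ℕ => if ℓ = 0 then 0 else
        s ^ ℓ / (2 * ℓ) *
          ∫ f : Fin ℓ → WF Ω k,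
            (Matrix.trace (List.ofFn fun i => PhiMat (xiP P) (f i)).prod - 1) ^ 2
            ∂(Measure.pi fun _ : Fin ℓ => P))
      (-(1 / 2) * ∑ j, Real.log (1 - s * lam j)) := by
  have hlog : HasSum (fun n : ℕ => ∑ j, (1 / 2) * ((s * lam j) ^ (n + 1) / ((n : ℝ) + 1)))
      (∑ j, (1 / 2) * -Real.log (1 - s * lam j)) :=
    hasSum_sum fun j _ => (Real.hasSum_pow_div_log_of_abs_lt_one
      (by rw [abs_mul, abs_of_pos hs]; exact hslam j)).mul_left _
  refine (hasSum_nat_add_iff' 1).1 ?_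
  have hval : ∑ j, (1 / 2) * -Real.log (1 - s * lam j) =
      -(1 / 2) * ∑ j, Real.log (1 - s * lam j) := by
    simp [Finset.mul_sum]
  rw [Finset.sum_range_one, if_pos rfl, sub_zero, ← hval]
  refine HasSum.congr_fun hlog fun n => ?_
  rw [if_neg n.succ_ne_zero, integral_trace_sub_one_sq P (xiP P) hΨval hPΨ hSYM.1 v lam hvE hvON
    heig hspan n.succ_ne_zero, Finset.mul_sum]
  refine Finset.sum_congr rfl fun j _ => ?_
  have : (n : ℝ) + 1 ≠ 0 := by positivity
  push_cast
  field_simp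
  exact (mul_pow _ _ _).symm
end
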